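/- Let φ̃_k(x) = T_k(x) − (2(k+2)/(k+3)) T_{k+2}(x) + ((k+1)/(k+3)) T_{k+4}(x). For all j, k ∈ ℕ: (i) if j < k or j − k is odd, then ⟨φ̃_j'''', φ̃_k⟩_σ = 0, where φ̃_j'''' denotes the fourth derivative of φ̃_j; (ii) if j ≥ k + 2 and j − k is even, then ⟨φ̃_j'''', φ̃_k⟩_σ = p_k q_j + r_k s_j, where p_k = 8k(k+1)(k+2)(k+4)π, q_j = 1/(j+3), r_k = 24(k+1)(k+2)π, and s_j = (j+2)²/(j+3). -/

import Mathlib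

/-!
The integral `⟨T_n^{(4)}, T_k⟩_σ` has a closed form, and the theorem follows by bilinearity.

Put `V_n = U_{n-1}`, so that `T_n^{(1)} = n V_n` and `V_{n+2} = V_n + 2 T_{n+1}`. Differentiating the
second relation `m + 1` times gives
`V_{n+2}^{(m+1)} = V_n^{(m+1)} + 2 (n+1) V_{n+1}^{(m)}`.
Hence, for fixed `k`, the sequence `n ↦ ⟨V_n^{(m+1)}, T_k⟩_σ` is a step-two summation of the one for
`m`. Orthogonality gives `⟨V_n, T_k⟩_σ = π` for `n > k` with `n - k` odd, and `0` otherwise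
(uniformly in `k`, including `k = 0`). Summing three times yields
`⟨V_n^{(3)}, T_k⟩_σ = π/48 (n² - k²)(n² - (k-2)²)(n² - (k+2)²)` for `n ≥ k` with `n - k` even, and `0`
otherwise.

The product vanishes at `n = k - 2, k, k + 2`. So the polynomial formula remains valid down to
`n = k - 2`, which covers all nine terms of `⟨φ̃_j^{(4)}, φ̃_k⟩_σ` when `j ≥ k + 2`, while the value
`0` persists up to `n = k + 2`, which covers all nine terms when `j < k`.
-/

open Real Polynomial

/-- The k-th Chebyshev polynomial of the first kind, as a real polynomial. -/
noncomputable def chebT (n : ℕ) : Polynomial ℝ := Polynomial.Chebyshev.T ℝ (n : ℤ)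

/-- The Chebyshev-weighted inner product `⟨f,g⟩_σ = ∫_{-1}^{1} f g (1-x²)^{-1/2} dx`. -/
noncomputable def chebInner (f g : Polynomial ℝ) : ℝ :=
  ∫ x in (-1:ℝ)..1, f.eval x * g.eval x / Real.sqrt (1 - x ^ 2)

/-- Shen's biharmonic basis function
`φ̃_k = T_k − (2(k+2)/(k+3)) T_{k+2} + ((k+1)/(k+3)) T_{k+4}`. -/
noncomputable def shenB (k : ℕ) : Polynomial ℝ :=
  chebT k - Polynomial.C ((2 * ((k : ℝ) + 2)) / ((k : ℝ) + 3)) * chebT (k + 2)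
    + Polynomial.C (((k : ℝ) + 1) / ((k : ℝ) + 3)) * chebT (k + 4)

/-- `p_k = 8k(k+1)(k+2)(k+4)π`. -/
noncomputable def pCoef (k : ℕ) : ℝ := 8 * k * (k + 1) * (k + 2) * (k + 4) * Real.pi

/-- `q_j = 1/(j+3)`. -/
noncomputable def qCoef (j : ℕ) : ℝ := 1 / (j + 3)

/-- `r_k = 24(k+1)(k+2)π`. -/
noncomputable def rCoef (k : ℕ) : ℝ := 24 * (k + 1) * (k + 2) * Real.pi

/-- `s_j = (j+2)²/(j+3)`. -/
noncomputable def sCoef (j : ℕ) : ℝ := (j + 2) ^ 2 / (j + 3)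

theorem chebInner_eq_measureT (f g : ℝ[X]) :
    chebInner f g = ∫ x, f.eval x * g.eval x ∂Chebyshev.measureT := by
  rw [Chebyshev.integral_measureT, chebInner]
  simp only [Real.sqrt_inv, div_eq_mul_inv]

theorem chebInner_add_left (f g h : ℝ[X]) :
    chebInner (f + g) h = chebInner f h + chebInner g h := by
  simp only [chebInner_eq_measureT, eval_add, add_mul]
  exact MeasureTheory.integral_add (Chebyshev.integrable_measureT (by fun_prop))
    (Chebyshev.integrable_measureT (by fun_prop))

theorem chebInner_C_mul_left (a : ℝ) (f h : ℝ[X]) :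
    chebInner (C a * f) h = a * chebInner f h := by
  simp only [chebInner_eq_measureT, eval_mul, eval_C, mul_assoc]
  exact MeasureTheory.integral_const_mul _ _

theorem chebInner_comm (f g : ℝ[X]) : chebInner f g = chebInner g f := by
  simp only [chebInner, mul_comm]

theorem chebInner_zero_left (h : ℝ[X]) : chebInner 0 h = 0 := by
  simp [chebInner]

theorem chebInner_sub_left (f g h : ℝ[X]) :
    chebInner (f - g) h = chebInner f h - chebInner g h := by
  have := chebInner_add_left (f - g) g h
  rw [sub_add_cancel] at this
  linarith

theorem chebInner_chebT_zero (k : ℕ) :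
    chebInner (chebT 0) (chebT k) = if k = 0 then π else 0 := by
  rw [chebInner_eq_measureT, chebT, chebT]
  split_ifs with h
  · subst h
    exact Chebyshev.integral_eval_T_real_mul_self_measureT_zero
  · exact Chebyshev.integral_eval_T_real_mul_eval_T_real_measureT_of_ne (Ne.symm h)

theorem chebInner_chebT_succ (n k : ℕ) :
    chebInner (chebT (n + 1)) (chebT k) = if n + 1 = k then π / 2 else 0 := by
  rw [chebInner_eq_measureT, chebT, chebT]
  split_ifs with h
  · subst h
    exact Chebyshev.integral_T_real_mul_self_measureT_of_ne_zero (Nat.succ_ne_zero n)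
  · exact Chebyshev.integral_eval_T_real_mul_eval_T_real_measureT_of_ne h

/-- The Chebyshev polynomial of the second kind with index shifted by one, `V_n = U_{n-1}`. The
shift makes `V_0 = 0` the starting value of the recurrences below. -/
noncomputable def chebV (n : ℕ) : ℝ[X] := Chebyshev.U ℝ ((n : ℤ) - 1)

theorem derivative_chebT (n : ℕ) : derivative (chebT n) = C (n : ℝ) * chebV n := by
  rw [chebT, chebV, Chebyshev.T_derivative_eq_U]
  simp

theorem chebV_zero : chebV 0 = 0 := by simp [chebV]

theorem chebV_one : chebV 1 = 1 := by simp [chebV]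

theorem chebV_add_two (n : ℕ) : chebV (n + 2) = C 2 * chebT (n + 1) + chebV n := by
  have h := Chebyshev.U_eq_two_mul_T_add_U ℝ ((n : ℤ) - 1)
  have e1 : ((n + 2 : ℕ) : ℤ) - 1 = (n : ℤ) - 1 + 2 := by push_cast; ring
  have e2 : ((n + 1 : ℕ) : ℤ) = (n : ℤ) - 1 + 2 := by push_cast; ring
  rw [chebV, chebV, chebT, e1, e2, h, C_ofNat]

theorem iterate_derivative_chebV_add_two (m n : ℕ) :
    derivative^[m + 1] (chebV (n + 2)) =
      C (2 * ((n : ℝ) + 1)) * derivative^[m] (chebV (n + 1)) + derivative^[m + 1] (chebV n) := by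
  rw [chebV_add_two, iterate_map_add, iterate_derivative_C_mul,
    Function.iterate_succ_apply (⇑derivative) m (chebT (n + 1)),
    derivative_chebT, iterate_derivative_C_mul, ← mul_assoc, ← C_mul]
  push_cast
  rfl

/-- The step-two recurrence in `n` for `⟨V_n^{(m+1)}, T_k⟩_σ` and its two starting values determine
this sequence from the one for `m`. -/
theorem chebInner_iterate_derivative_chebV_eq (m k : ℕ) (F : ℕ → ℝ) (h0 : F 0 = 0) (h1 : F 1 = 0)
    (h : ∀ n, F (n + 2) =
      2 * ((n : ℝ) + 1) * chebInner (derivative^[m] (chebV (n + 1))) (chebT k) + F n) (n : ℕ) :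
    chebInner (derivative^[m + 1] (chebV n)) (chebT k) = F n := by
  induction n using Nat.twoStepInduction with
  | zero => rw [chebV_zero, iterate_derivative_zero, chebInner_zero_left, h0]
  | one =>
    rw [chebV_one, Function.iterate_succ_apply, derivative_one, iterate_derivative_zero,
      chebInner_zero_left, h1]
  | more n ih _ =>
    rw [iterate_derivative_chebV_add_two, chebInner_add_left, chebInner_C_mul_left, ih, h]

theorem chebInner_chebV (n k : ℕ) :
    chebInner (chebV n) (chebT k) = if k < n ∧ n % 2 ≠ k % 2 then π else 0 := by
  induction n using Nat.twoStepInduction with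
  | zero => simp [chebV_zero, chebInner_zero_left]
  | one =>
    have : chebV 1 = chebT 0 := by simp [chebV_one, chebT]
    rw [this, chebInner_chebT_zero]
    split_ifs <;> first | rfl | omega
  | more n ih _ =>
    rw [chebV_add_two, chebInner_add_left, chebInner_C_mul_left, ih, chebInner_chebT_succ]
    split_ifs <;> first | omega | ring

theorem chebInner_derivative_chebV (n k : ℕ) :
    chebInner (derivative^[1] (chebV n)) (chebT k) =
      if k ≤ n ∧ n % 2 = k % 2 then π / 2 * ((n : ℝ) ^ 2 - k ^ 2) else 0 := by
  refine chebInner_iterate_derivative_chebV_eq 0 k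
    (fun n => if k ≤ n ∧ n % 2 = k % 2 then π / 2 * ((n : ℝ) ^ 2 - k ^ 2) else 0) ?_ ?_ ?_ n
  · split_ifs
    · obtain rfl : k = 0 := by omega
      simp
    · rfl
  · split_ifs
    · obtain rfl : k = 1 := by omega
      simp
    · rfl
  · intro n
    rw [Function.iterate_zero_apply, chebInner_chebV]
    split_ifs <;> first | omega | (push_cast; ring1) | skip
    -- The summation starts at `n + 2 = k`, a zero of the polynomial.
    all_goals
      obtain rfl : k = n + 2 := by omega
      push_cast; ring

theorem chebInner_derivative_two_chebV (n k : ℕ) :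
    chebInner (derivative^[2] (chebV n)) (chebT k) =
      if k ≤ n ∧ n % 2 ≠ k % 2 then
        π / 8 * (((n : ℝ) ^ 2 - (k - 1) ^ 2) * ((n : ℝ) ^ 2 - (k + 1) ^ 2)) else 0 := by
  refine chebInner_iterate_derivative_chebV_eq 1 k
    (fun n => if k ≤ n ∧ n % 2 ≠ k % 2 then
        π / 8 * (((n : ℝ) ^ 2 - (k - 1) ^ 2) * ((n : ℝ) ^ 2 - (k + 1) ^ 2)) else 0) ?_ ?_ ?_ n
  · rw [if_neg (by omega)]
  · split_ifs
    · obtain rfl : k = 0 := by omega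
      simp
    · rfl
  · intro n
    rw [chebInner_derivative_chebV]
    split_ifs <;> first | omega | (push_cast; ring1) | skip
    -- The summation starts at `n + 2 = k + 1`, a zero of the polynomial.
    all_goals
      obtain rfl : k = n + 1 := by omega
      push_cast; ring

theorem chebInner_derivative_three_chebV (n k : ℕ) :
    chebInner (derivative^[3] (chebV n)) (chebT k) =
      if k ≤ n ∧ n % 2 = k % 2 then
        π / 48 * (((n : ℝ) ^ 2 - k ^ 2) * ((n : ℝ) ^ 2 - (k - 2) ^ 2) *
          ((n : ℝ) ^ 2 - (k + 2) ^ 2)) else 0 := by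
  refine chebInner_iterate_derivative_chebV_eq 2 k
    (fun n => if k ≤ n ∧ n % 2 = k % 2 then
        π / 48 * (((n : ℝ) ^ 2 - k ^ 2) * ((n : ℝ) ^ 2 - (k - 2) ^ 2) *
          ((n : ℝ) ^ 2 - (k + 2) ^ 2)) else 0) ?_ ?_ ?_ n
  · split_ifs
    · obtain rfl : k = 0 := by omega
      simp
    · rfl
  · split_ifs
    · obtain rfl : k = 1 := by omega
      simp
    · rfl
  · intro n
    rw [chebInner_derivative_two_chebV]
    split_ifs <;> first | omega | (push_cast; ring1) | skip
    -- The summation starts at `n + 2 = k`, a zero of the polynomial.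
    all_goals
      obtain rfl : k = n + 2 := by omega
      push_cast; ring

theorem chebInner_derivative_four_chebT (n k : ℕ) :
    chebInner (derivative^[4] (chebT n)) (chebT k) =
      n * chebInner (derivative^[3] (chebV n)) (chebT k) := by
  rw [Function.iterate_succ_apply, derivative_chebT, iterate_derivative_C_mul, chebInner_C_mul_left]

/-- The polynomial closed form holds down to `n = k - 2`, where both sides vanish. -/
theorem chebInner_derivative_four_chebT_eq (n k : ℕ) (h : k ≤ n + 2) (hp : n % 2 = k % 2) :
    chebInner (derivative^[4] (chebT n)) (chebT k) =
      n * (π / 48 * (((n : ℝ) ^ 2 - k ^ 2) * ((n : ℝ) ^ 2 - (k - 2) ^ 2) *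
          ((n : ℝ) ^ 2 - (k + 2) ^ 2))) := by
  rw [chebInner_derivative_four_chebT, chebInner_derivative_three_chebV]
  split_ifs with hk
  · rfl
  · obtain rfl : k = n + 2 := by omega
    push_cast; ring

/-- The case `n ≤ k + 2` includes `n = k` and `n = k + 2`, which are zeros of the closed form. -/
theorem chebInner_derivative_four_chebT_eq_zero (n k : ℕ) (h : n ≤ k + 2 ∨ n % 2 ≠ k % 2) :
    chebInner (derivative^[4] (chebT n)) (chebT k) = 0 := by
  rw [chebInner_derivative_four_chebT, chebInner_derivative_three_chebV]
  split_ifs with hk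
  · obtain rfl | rfl : n = k ∨ n = k + 2 := by omega
    · ring
    · push_cast; ring
  · ring

theorem chebInner_shenB_right (f : ℝ[X]) (k : ℕ) :
    chebInner f (shenB k) = chebInner f (chebT k)
      - 2 * ((k : ℝ) + 2) / (k + 3) * chebInner f (chebT (k + 2))
      + ((k : ℝ) + 1) / (k + 3) * chebInner f (chebT (k + 4)) := by
  rw [chebInner_comm f (shenB k), shenB, chebInner_add_left, chebInner_sub_left,
    chebInner_C_mul_left, chebInner_C_mul_left]
  simp only [chebInner_comm f]

theorem chebInner_derivative_four_shenB_left (j : ℕ) (g : ℝ[X]) :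
    chebInner (derivative^[4] (shenB j)) g = chebInner (derivative^[4] (chebT j)) g
      - 2 * ((j : ℝ) + 2) / (j + 3) * chebInner (derivative^[4] (chebT (j + 2))) g
      + ((j : ℝ) + 1) / (j + 3) * chebInner (derivative^[4] (chebT (j + 4))) g := by
  rw [shenB, iterate_map_add, iterate_derivative_sub, iterate_derivative_C_mul,
    iterate_derivative_C_mul, chebInner_add_left, chebInner_sub_left,
    chebInner_C_mul_left, chebInner_C_mul_left]

/-- Entries of the fourth-derivative (biharmonic) matrix
`Q̃_{kj} = ⟨φ̃_j'''', φ̃_k⟩_σ` above the diagonal: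
(i) they vanish for `j < k` or `j − k` odd,
(ii) for `j ≥ k+2` with `j − k` even they equal `p_k q_j + r_k s_j`. -/
theorem shen_biharmonic_fourth_derivative_matrix :
    (∀ j k : ℕ, (j < k ∨ j % 2 ≠ k % 2) →
      chebInner ((⇑Polynomial.derivative)^[4] (shenB j)) (shenB k) = 0) ∧
    (∀ j k : ℕ, k + 2 ≤ j → j % 2 = k % 2 →
      chebInner ((⇑Polynomial.derivative)^[4] (shenB j)) (shenB k) =
        pCoef k * qCoef j + rCoef k * sCoef j) := by
  refine ⟨fun j k h => ?_, fun j k h hp => ?_⟩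
  · simp only [chebInner_shenB_right, chebInner_derivative_four_shenB_left]
    -- For equal parities, `j < k` improves to `j + 2 ≤ k`.
    repeat rw [chebInner_derivative_four_chebT_eq_zero _ _ (by omega)]
    ring
  · simp only [chebInner_shenB_right, chebInner_derivative_four_shenB_left]
    repeat rw [chebInner_derivative_four_chebT_eq _ _ (by omega) (by omega)]
    rw [pCoef, qCoef, rCoef, sCoef]
    have hj : (j : ℝ) + 3 ≠ 0 := by positivity
    have hk : (k : ℝ) + 3 ≠ 0 := by positivity
    push_cast
    field_simp
    ring
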